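/- The entropy-regularized objective L_λ(θ) = V^{π_θ}(μ) + Σ_{n=1}^N (λ/(|S_n||A_n|))·Σ_{s_n∈S_n, a_n∈A_n} log π_{θ_n}(a_n|s_n) is (48N²/(1−γ)³ + Σ_{n=1}^N 2λ/|S_n|)-smooth: for all parameters θ, θ', |L_λ(θ) − L_λ(θ') − ⟨∇_θ L_λ(θ), θ − θ'⟩| ≤ (24N²/(1−γ)³ + Σ_{n=1}^N λ/|S_n|)·‖θ − θ'‖₂². -/

import Mathlib

open Finset MeasureTheory
open scoped BigOperators Classical

noncomputable section

/-- Softmax policy with parameter `θ`. -/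
def softmaxPol {S A : Type*} [Fintype A] (θ : S → A → ℝ) (s : S) (a : A) : ℝ :=
  Real.exp (θ s a) / ∑ a' : A, Real.exp (θ s a')

/-- Global product softmax policy. -/
def gPolicy {N : ℕ} {S A : Fin N → Type*} [∀ n, Fintype (A n)]
    (θ : ∀ n, S n → A n → ℝ) (s : ∀ n, S n) (a : ∀ n, A n) : ℝ :=
  ∏ n, softmaxPol (θ n) (s n) (a n)

/-- Global product transition kernel. -/
def gKernel {N : ℕ} {S A : Fin N → Type*} (P : ∀ n, S n → A n → S n → ℝ)
    (s : ∀ n, S n) (a : ∀ n, A n) (s' : ∀ n, S n) : ℝ :=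
  ∏ n, P n (s n) (a n) (s' n)

/-- Distribution of the state at time `t` under kernel `K`, policy `p`,
initial state distribution `ρ`. -/
def stateDist {GS GA : Type*} [Fintype GS] [Fintype GA]
    (K : GS → GA → GS → ℝ) (p : GS → GA → ℝ) (ρ : GS → ℝ) : ℕ → GS → ℝ
  | 0 => ρ
  | t + 1 => fun s' => ∑ s : GS, ∑ a : GA, stateDist K p ρ t s * p s a * K s a s'

/-- Expected reward at time `t`. -/
def expReward {GS GA : Type*} [Fintype GS] [Fintype GA]
    (K : GS → GA → GS → ℝ) (p : GS → GA → ℝ) (R : GS → GA → ℝ) (ρ : GS → ℝ) (t : ℕ) : ℝ :=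
  ∑ s : GS, ∑ a : GA, stateDist K p ρ t s * p s a * R s a

/-- Expected discounted reward with initial state distribution `ρ`:
`V^p(ρ) = E[∑_t γ^t R(s(t),a(t)) | s(0) ∼ ρ]`. -/
def valueD {GS GA : Type*} [Fintype GS] [Fintype GA] (γ : ℝ)
    (K : GS → GA → GS → ℝ) (p : GS → GA → ℝ) (R : GS → GA → ℝ) (ρ : GS → ℝ) : ℝ :=
  ∑' t : ℕ, γ ^ t * expReward K p R ρ t

/-- Point mass at `s0`. -/
def diracD {GS : Type*} (s0 : GS) : GS → ℝ := fun s => if s = s0 then 1 else 0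

/-- State value function `V^p(s)`. -/
def valueV {GS GA : Type*} [Fintype GS] [Fintype GA] (γ : ℝ)
    (K : GS → GA → GS → ℝ) (p : GS → GA → ℝ) (R : GS → GA → ℝ) (s0 : GS) : ℝ :=
  valueD γ K p R (diracD s0)

/-- State-action value function `Q^p(s,a) = R(s,a) + γ E_{s' ∼ K(⬝|s,a)}[V^p(s')]`. -/
def valueQ {GS GA : Type*} [Fintype GS] [Fintype GA] (γ : ℝ)
    (K : GS → GA → GS → ℝ) (p : GS → GA → ℝ) (R : GS → GA → ℝ) (s0 : GS) (a0 : GA) : ℝ :=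
  R s0 a0 + γ * ∑ s' : GS, K s0 a0 s' * valueV γ K p R s'

/-- Discounted state occupancy measure `d_ρ^p(s)`. -/
def occup {GS GA : Type*} [Fintype GS] [Fintype GA] (γ : ℝ)
    (K : GS → GA → GS → ℝ) (p : GS → GA → ℝ) (ρ : GS → ℝ) (s : GS) : ℝ :=
  (1 - γ) * ∑' t : ℕ, γ ^ t * stateDist K p ρ t s

/-- Deterministic policy associated with an action-selection map. -/
def detPol {GS GA : Type*} (f : GS → GA) : GS → GA → ℝ :=
  fun s a => if a = f s then 1 else 0

/-- Squared Euclidean norm of a multi-agent parameter vector. -/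
def sqNorm {N : ℕ} {S A : Fin N → Type*} [∀ n, Fintype (S n)] [∀ n, Fintype (A n)]
    (ν : ∀ n, S n → A n → ℝ) : ℝ :=
  ∑ n, ∑ s, ∑ a, (ν n s a) ^ 2

/-- Euclidean norm of a multi-agent parameter vector. -/
def eucNorm {N : ℕ} {S A : Fin N → Type*} [∀ n, Fintype (S n)] [∀ n, Fintype (A n)]
    (ν : ∀ n, S n → A n → ℝ) : ℝ :=
  Real.sqrt (sqNorm ν)

end

/-!
The product of the softmax policies of the agents is again a softmax policy on the joint spaces, and
its logits are the sums of the logits of the agents. By Cauchy-Schwarz, changing the parameters by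
`v` changes each joint logit by at most `√N ‖v‖₂`. Along a segment of logits a softmax policy has
`ℓ¹`-speed at most the standard deviation of the direction, and `ℓ¹`-acceleration at most twice its
variance. Hence the joint policy moves by at most `√N ‖v‖₂` in `ℓ¹`, and differs from its
linearization by at most `N ‖v‖₂²`.

By the performance difference lemma, replacing a policy `p` by `p'` changes the value by the value
of `p'` for the reward `∑ a, (p' - p)(s, a) Q^p(s, a)`. Applying the lemma a second time, to this
new reward, replaces `p'` by `p` in its value, which turns it into the policy gradient of `p' - p`;
the error is quadratic in `‖p' - p‖₁`. For the regularizer, the second derivative of the log-policy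
is minus the variance of the direction.
-/

section Taylor

variable {E : Type*} [NormedAddCommGroup E] [NormedSpace ℝ E] {f f' f'' : ℝ → E} {M : ℝ}

lemma norm_sub_le_of_hasDerivAt (hf : ∀ u, HasDerivAt f (f' u) u) (hM : ∀ u, ‖f' u‖ ≤ M) :
    ‖f 1 - f 0‖ ≤ M :=
  norm_image_sub_le_of_norm_deriv_le_segment_01' (fun u _ => (hf u).hasDerivWithinAt)
    fun u _ => hM u

lemma norm_sub_sub_deriv_le_of_hasDerivAt (hf : ∀ u, HasDerivAt f (f' u) u)
    (hf' : ∀ u, HasDerivAt f' (f'' u) u) (hM : ∀ u, ‖f'' u‖ ≤ M) :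
    ‖f 1 - f 0 - f' 0‖ ≤ M / 2 := by
  have hslope : ∀ u ∈ Set.Ico (0 : ℝ) 1, ‖f' u - f' 0‖ ≤ M * u := fun u hu => by
    simpa using norm_image_sub_le_of_norm_deriv_le_segment'
      (fun v _ => (hf' v).hasDerivWithinAt) (fun v _ => hM v) u (Set.right_mem_Icc.2 hu.1)
  have hrem : ∀ u, HasDerivAt (fun u => f u - f 0 - u • f' 0) (f' u - f' 0) u := fun u => by
    simpa using ((hf u).sub_const (f 0)).fun_sub ((hasDerivAt_id u).smul_const (f' 0))
  have hquad : ∀ u, HasDerivAt (fun u : ℝ => M / 2 * u ^ 2) (M * u) u := fun u =>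
    ((hasDerivAt_pow 2 u).const_mul (M / 2)).congr_deriv (by simp; ring)
  simpa using image_norm_le_of_norm_deriv_right_le_deriv_boundary
    (fun u _ => (hrem u).continuousAt.continuousWithinAt)
    (fun u _ => (hrem u).hasDerivWithinAt) (by simp) hquad hslope
    (Set.right_mem_Icc.2 zero_le_one)

end Taylor

section SumAbs

variable {ι : Type*} [Fintype ι]

lemma abs_sum_mul_le {q f : ι → ℝ} {δ c : ℝ} (hc : 0 ≤ c) (hq : ∑ i, |q i| ≤ δ)
    (hf : ∀ i, |f i| ≤ c) : |∑ i, q i * f i| ≤ δ * c :=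
  calc |∑ i, q i * f i| ≤ ∑ i, |q i * f i| := abs_sum_le_sum_abs _ _
    _ ≤ ∑ i, |q i| * c := sum_le_sum fun i _ => by
      rw [abs_mul]; exact mul_le_mul_of_nonneg_left (hf i) (abs_nonneg _)
    _ ≤ δ * c := by rw [← sum_mul]; exact mul_le_mul_of_nonneg_right hq hc

lemma abs_sum_mul_le_of_mem_stdSimplex {p f : ι → ℝ} {c : ℝ} (hp : p ∈ stdSimplex ℝ ι)
    (hf : ∀ i, |f i| ≤ c) : |∑ i, p i * f i| ≤ c :=
  calc |∑ i, p i * f i| ≤ ∑ i, |p i * f i| := abs_sum_le_sum_abs _ _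
    _ ≤ ∑ i, p i * c := sum_le_sum fun i _ => by
      rw [abs_mul, abs_of_nonneg (hp.1 i)]; exact mul_le_mul_of_nonneg_left (hf i) (hp.1 i)
    _ = c := by rw [← sum_mul, hp.2, one_mul]

lemma hasDerivAt_toLp_one {f f' : ℝ → ι → ℝ} {u : ℝ}
    (hf : ∀ i, HasDerivAt (fun u => f u i) (f' u i) u) :
    HasDerivAt (fun u => WithLp.toLp 1 (f u)) (WithLp.toLp 1 (f' u)) u :=
  (PiLp.hasFDerivAt_toLp (𝕜 := ℝ) 1 (f u)).comp_hasDerivAt u (hasDerivAt_pi.2 hf)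

lemma sum_abs_sub_le_of_hasDerivAt {f f' : ℝ → ι → ℝ} {M : ℝ}
    (hf : ∀ u i, HasDerivAt (fun u => f u i) (f' u i) u) (hM : ∀ u, ∑ i, |f' u i| ≤ M) :
    ∑ i, |f 1 i - f 0 i| ≤ M := by
  simpa [PiLp.norm_eq_of_L1] using norm_sub_le_of_hasDerivAt
    (fun u => hasDerivAt_toLp_one (hf u)) (fun u => by simpa [PiLp.norm_eq_of_L1] using hM u)

lemma sum_abs_sub_sub_deriv_le_of_hasDerivAt {f f' f'' : ℝ → ι → ℝ} {M : ℝ}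
    (hf : ∀ u i, HasDerivAt (fun u => f u i) (f' u i) u)
    (hf' : ∀ u i, HasDerivAt (fun u => f' u i) (f'' u i) u)
    (hM : ∀ u, ∑ i, |f'' u i| ≤ M) :
    ∑ i, |f 1 i - f 0 i - f' 0 i| ≤ M / 2 := by
  simpa [PiLp.norm_eq_of_L1] using norm_sub_sub_deriv_le_of_hasDerivAt
    (fun u => hasDerivAt_toLp_one (hf u)) (fun u => hasDerivAt_toLp_one (hf' u))
    (fun u => by simpa [PiLp.norm_eq_of_L1] using hM u)

lemma abs_average_le_one {ι : Type*} {s : Finset ι} {x : ι → ℝ} (hx : ∀ i ∈ s, |x i| ≤ 1) :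
    |(#s : ℝ)⁻¹ * ∑ i ∈ s, x i| ≤ 1 := by
  rw [abs_mul, abs_of_nonneg (by positivity : (0 : ℝ) ≤ (#s : ℝ)⁻¹)]
  refine inv_mul_le_one_of_le₀ ((abs_sum_le_sum_abs _ _).trans ?_) (#s).cast_nonneg
  simpa using sum_le_sum hx

end SumAbs

section Softmax

variable {S A : Type*} [Fintype A] (x w : S → A → ℝ) (s : S) (a : A)

/-- The mean of `w(s, ·)` under the softmax policy with logits `x`. -/
noncomputable def softmaxMean : ℝ := ∑ a, softmaxPol x s a * w s a

/-- The variance of `w(s, ·)` under the softmax policy with logits `x`. -/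
noncomputable def softmaxVar : ℝ := ∑ a, softmaxPol x s a * (w s a - softmaxMean x w s) ^ 2

/-- The derivative at `x` of the logarithm of the softmax policy as a function of its logits. -/
noncomputable def logSoftmaxDeriv : (S → A → ℝ) →ₗ[ℝ] (S → A → ℝ) where
  toFun w s a := w s a - softmaxMean x w s
  map_add' v w := by
    funext s a
    simp only [softmaxMean, Pi.add_apply, mul_add, sum_add_distrib, add_sub_add_comm]
  map_smul' c w := by
    funext s a
    simp only [softmaxMean, Pi.smul_apply, smul_eq_mul, mul_left_comm _ c, ← mul_sum,
      ← mul_sub, RingHom.id_apply]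

/-- The derivative at `x` of the softmax policy as a function of its logits. -/
noncomputable def softmaxDeriv : (S → A → ℝ) →ₗ[ℝ] (S → A → ℝ) where
  toFun w s a := softmaxPol x s a * logSoftmaxDeriv x w s a
  map_add' v w := by
    funext s a
    simp only [map_add, Pi.add_apply, mul_add]
  map_smul' c w := by
    funext s a
    simp only [map_smul, Pi.smul_apply, smul_eq_mul, mul_left_comm _ c, RingHom.id_apply]

lemma softmaxDeriv_apply :
    softmaxDeriv x w s a = softmaxPol x s a * (w s a - softmaxMean x w s) := rfl

variable [Nonempty A]

lemma sum_exp_pos (y : A → ℝ) : 0 < ∑ a, Real.exp (y a) :=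
  sum_pos (fun _ _ => Real.exp_pos _) univ_nonempty

lemma softmaxPol_pos : 0 < softmaxPol x s a := div_pos (Real.exp_pos _) (sum_exp_pos _)

lemma softmaxPol_mem_stdSimplex : softmaxPol x s ∈ stdSimplex ℝ A :=
  ⟨fun a => (softmaxPol_pos x s a).le, by
    simp only [softmaxPol, ← sum_div]
    exact div_self (sum_exp_pos _).ne'⟩

lemma softmaxVar_nonneg : 0 ≤ softmaxVar x w s :=
  sum_nonneg fun a _ => mul_nonneg (softmaxPol_pos x s a).le (sq_nonneg _)

lemma softmaxVar_eq :
    softmaxVar x w s = ∑ a, softmaxPol x s a * w s a ^ 2 - softmaxMean x w s ^ 2 := by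
  set m := softmaxMean x w s with hm
  calc softmaxVar x w s
      = ∑ a, (softmaxPol x s a * w s a ^ 2 - 2 * m * (softmaxPol x s a * w s a)
          + m ^ 2 * softmaxPol x s a) := sum_congr rfl fun a _ => by rw [← hm]; ring
    _ = ∑ a, softmaxPol x s a * w s a ^ 2 - 2 * m * m + m ^ 2 * 1 := by
      rw [sum_add_distrib, sum_sub_distrib, ← mul_sum, ← mul_sum,
        (softmaxPol_mem_stdSimplex x s).2, ← softmaxMean]
    _ = _ := by ring

variable {x w s} in
lemma softmaxVar_le {C : ℝ} (hw : ∀ a, w s a ^ 2 ≤ C) : softmaxVar x w s ≤ C := by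
  have hmean := abs_sum_mul_le_of_mem_stdSimplex (softmaxPol_mem_stdSimplex x s)
    (f := fun a => w s a ^ 2) (fun a => by rw [abs_sq]; exact hw a)
  rw [softmaxVar_eq]
  linarith [le_abs_self (∑ a, softmaxPol x s a * w s a ^ 2), sq_nonneg (softmaxMean x w s)]

lemma hasDerivAt_softmaxPol (u : ℝ) :
    HasDerivAt (fun u : ℝ => softmaxPol (x + u • w) s a) (softmaxDeriv (x + u • w) w s a) u := by
  have hexp : ∀ b, HasDerivAt (fun u : ℝ => Real.exp ((x + u • w) s b))
      (Real.exp ((x + u • w) s b) * w s b) u := fun b => by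
    simpa using (((hasDerivAt_id u).mul_const (w s b)).const_add (x s b)).exp
  have hne := (sum_exp_pos ((x + u • w) s)).ne'
  refine ((hexp a).fun_div (.fun_sum fun b _ => hexp b) hne).congr_deriv ?_
  simp only [softmaxDeriv_apply, softmaxMean, softmaxPol, div_mul_eq_mul_div, ← sum_div]
  field_simp

lemma hasDerivAt_softmaxMean (u : ℝ) :
    HasDerivAt (fun u : ℝ => softmaxMean (x + u • w) w s) (softmaxVar (x + u • w) w s) u := by
  refine (HasDerivAt.fun_sum fun a _ =>
    (hasDerivAt_softmaxPol x w s a u).mul_const (w s a)).congr_deriv ?_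
  set y := x + u • w
  calc ∑ a, softmaxDeriv y w s a * w s a
      = ∑ a, (softmaxPol y s a * w s a ^ 2 - softmaxPol y s a * w s a * softmaxMean y w s) :=
        sum_congr rfl fun a _ => by rw [softmaxDeriv_apply]; ring
    _ = softmaxVar y w s := by
      rw [sum_sub_distrib, ← sum_mul, ← softmaxMean, softmaxVar_eq, sq (softmaxMean y w s)]

lemma hasDerivAt_softmaxDeriv (u : ℝ) :
    HasDerivAt (fun u : ℝ => softmaxDeriv (x + u • w) w s a)
      (softmaxPol (x + u • w) s a * ((w s a - softmaxMean (x + u • w) w s) ^ 2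
        - softmaxVar (x + u • w) w s)) u :=
  ((hasDerivAt_softmaxPol x w s a u).mul
    ((hasDerivAt_softmaxMean x w s u).const_sub (w s a))).congr_deriv
    (by rw [softmaxDeriv_apply]; ring)

lemma sum_abs_softmaxDeriv_le : ∑ a, |softmaxDeriv x w s a| ≤ √(softmaxVar x w s) := by
  refine Real.le_sqrt_of_sq_le ?_
  have hcs := sum_sq_le_sum_mul_sum_of_sq_le_mul univ
    (r := fun a => |softmaxDeriv x w s a|)
    (fun a _ => (softmaxPol_pos x s a).le)
    (fun a _ => mul_nonneg (softmaxPol_pos x s a).le (sq_nonneg (w s a - softmaxMean x w s)))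
    (fun a _ => le_of_eq (by rw [sq_abs, softmaxDeriv_apply]; ring))
  rwa [(softmaxPol_mem_stdSimplex x s).2, one_mul] at hcs

lemma sum_abs_softmaxPol_mul_sub_softmaxVar_le :
    ∑ a, |softmaxPol x s a * ((w s a - softmaxMean x w s) ^ 2 - softmaxVar x w s)|
      ≤ 2 * softmaxVar x w s :=
  calc _ ≤ ∑ a, (softmaxPol x s a * (w s a - softmaxMean x w s) ^ 2
          + softmaxPol x s a * softmaxVar x w s) := sum_le_sum fun a _ => by
        have hπ := (softmaxPol_pos x s a).le
        have hvar := softmaxVar_nonneg x w s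
        rw [abs_mul, abs_of_nonneg hπ, ← mul_add]
        refine mul_le_mul_of_nonneg_left ((abs_sub _ _).trans_eq ?_) hπ
        rw [abs_sq, abs_of_nonneg hvar]
    _ = 2 * softmaxVar x w s := by
      rw [sum_add_distrib, ← sum_mul, (softmaxPol_mem_stdSimplex x s).2, ← softmaxVar]
      ring

variable {x w s}
variable {C : ℝ}

lemma sum_abs_softmaxPol_sub_le (hw : ∀ a, w s a ^ 2 ≤ C) :
    ∑ a, |softmaxPol (x + w) s a - softmaxPol x s a| ≤ √C := by
  simpa using sum_abs_sub_le_of_hasDerivAt (fun u a => hasDerivAt_softmaxPol x w s a u)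
    fun u => (sum_abs_softmaxDeriv_le _ w s).trans (Real.sqrt_le_sqrt (softmaxVar_le hw))

lemma sum_abs_softmaxPol_sub_sub_softmaxDeriv_le (hw : ∀ a, w s a ^ 2 ≤ C) :
    ∑ a, |softmaxPol (x + w) s a - softmaxPol x s a - softmaxDeriv x w s a| ≤ C := by
  have htaylor := sum_abs_sub_sub_deriv_le_of_hasDerivAt
    (fun u a => hasDerivAt_softmaxPol x w s a u) (fun u a => hasDerivAt_softmaxDeriv x w s a u)
    (fun u => (sum_abs_softmaxPol_mul_sub_softmaxVar_le _ w s).trans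
      (mul_le_mul_of_nonneg_left (softmaxVar_le hw) zero_le_two))
  simpa using htaylor

lemma abs_log_softmaxPol_sub_sub_le (hw : ∀ a, w s a ^ 2 ≤ C) :
    |Real.log (softmaxPol (x + w) s a) - Real.log (softmaxPol x s a)
      - logSoftmaxDeriv x w s a| ≤ C / 2 := by
  have hlog : ∀ u : ℝ, HasDerivAt (fun u : ℝ => Real.log (softmaxPol (x + u • w) s a))
      (logSoftmaxDeriv (x + u • w) w s a) u := fun u => by
    have hpos := (softmaxPol_pos (x + u • w) s a).ne'
    refine ((hasDerivAt_softmaxPol x w s a u).log hpos).congr_deriv ?_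
    exact mul_div_cancel_left₀ _ hpos
  simpa using norm_sub_sub_deriv_le_of_hasDerivAt hlog
    (fun u => (hasDerivAt_softmaxMean x w s u).const_sub (w s a))
    (fun u => by
      rw [norm_neg, Real.norm_of_nonneg (softmaxVar_nonneg _ w s)]
      exact softmaxVar_le hw)

end Softmax

section Occupancy

variable {GS GA : Type*} [Fintype GS] [Fintype GA] {γ : ℝ} {K : GS → GA → GS → ℝ}
  {p : GS → GA → ℝ} {R : GS → GA → ℝ} {μ : GS → ℝ} {c : ℝ}

lemma stateDist_mem_stdSimplex (hK : ∀ s a, K s a ∈ stdSimplex ℝ GS)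
    (hp : ∀ s, p s ∈ stdSimplex ℝ GA) (hμ : μ ∈ stdSimplex ℝ GS) (t : ℕ) :
    stateDist K p μ t ∈ stdSimplex ℝ GS := by
  induction t with
  | zero => exact hμ
  | succ t ih =>
    refine ⟨fun s' => sum_nonneg fun s _ => sum_nonneg fun a _ =>
      mul_nonneg (mul_nonneg (ih.1 s) ((hp s).1 a)) ((hK s a).1 s'), ?_⟩
    calc ∑ s', ∑ s, ∑ a, stateDist K p μ t s * p s a * K s a s'
        = ∑ s, ∑ a, ∑ s', stateDist K p μ t s * p s a * K s a s' := by
          rw [sum_comm]; exact sum_congr rfl fun s _ => sum_comm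
      _ = 1 := by simp only [← mul_sum, (hK _ _).2, (hp _).2, mul_one, ih.2]

lemma diracD_mem_stdSimplex (s₀ : GS) : diracD s₀ ∈ stdSimplex ℝ GS :=
  ⟨fun s => by unfold diracD; split_ifs <;> norm_num, by simp [diracD]⟩

lemma summable_pow_mul_stateDist (hγ : 0 ≤ γ) (hγ1 : γ < 1)
    (hK : ∀ s a, K s a ∈ stdSimplex ℝ GS) (hp : ∀ s, p s ∈ stdSimplex ℝ GA)
    (hμ : μ ∈ stdSimplex ℝ GS) (s : GS) :
    Summable fun t : ℕ => γ ^ t * stateDist K p μ t s := by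
  have hmem t := mem_Icc_of_mem_stdSimplex (stateDist_mem_stdSimplex hK hp hμ t) s
  exact (summable_geometric_of_lt_one hγ hγ1).of_nonneg_of_le
    (fun t => mul_nonneg (pow_nonneg hγ t) (hmem t).1)
    fun t => mul_le_of_le_one_right (pow_nonneg hγ t) (hmem t).2

lemma occup_mem_stdSimplex (hγ : 0 ≤ γ) (hγ1 : γ < 1)
    (hK : ∀ s a, K s a ∈ stdSimplex ℝ GS) (hp : ∀ s, p s ∈ stdSimplex ℝ GA)
    (hμ : μ ∈ stdSimplex ℝ GS) : occup γ K p μ ∈ stdSimplex ℝ GS := by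
  have hdist := stateDist_mem_stdSimplex hK hp hμ
  refine ⟨fun s => mul_nonneg (sub_nonneg.2 hγ1.le)
    (tsum_nonneg fun t => mul_nonneg (pow_nonneg hγ t) ((hdist t).1 s)), ?_⟩
  calc ∑ s, occup γ K p μ s
      = (1 - γ) * ∑' t : ℕ, ∑ s, γ ^ t * stateDist K p μ t s := by
        rw [Summable.tsum_finsetSum fun s _ => summable_pow_mul_stateDist hγ hγ1 hK hp hμ s,
          mul_sum]
        rfl
    _ = 1 := by
      simp only [← mul_sum, (hdist _).2, mul_one, tsum_geometric_of_lt_one hγ hγ1]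
      exact mul_inv_cancel₀ (sub_pos.2 hγ1).ne'

lemma hasSum_pow_mul_sum_stateDist (hγ : 0 ≤ γ) (hγ1 : γ < 1)
    (hK : ∀ s a, K s a ∈ stdSimplex ℝ GS) (hp : ∀ s, p s ∈ stdSimplex ℝ GA)
    (hμ : μ ∈ stdSimplex ℝ GS) (X : GS → ℝ) :
    HasSum (fun t : ℕ => γ ^ t * ∑ s, stateDist K p μ t s * X s)
      ((1 - γ)⁻¹ * ∑ s, occup γ K p μ s * X s) := by
  have hsum : HasSum (fun t : ℕ => ∑ s, γ ^ t * stateDist K p μ t s * X s)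
      (∑ s, (∑' t : ℕ, γ ^ t * stateDist K p μ t s) * X s) :=
    hasSum_sum fun s _ => (summable_pow_mul_stateDist hγ hγ1 hK hp hμ s).hasSum.mul_right (X s)
  simpa only [occup, mul_assoc, ← mul_sum, inv_mul_cancel_left₀ (sub_pos.2 hγ1).ne'] using hsum

lemma expReward_eq_sum_stateDist (ρ : GS → ℝ) (t : ℕ) :
    expReward K p R ρ t = ∑ s, stateDist K p ρ t s * ∑ a, p s a * R s a := by
  simp only [expReward, mul_sum, mul_assoc]

lemma hasSum_pow_mul_expReward (hγ : 0 ≤ γ) (hγ1 : γ < 1)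
    (hK : ∀ s a, K s a ∈ stdSimplex ℝ GS) (hp : ∀ s, p s ∈ stdSimplex ℝ GA)
    (hμ : μ ∈ stdSimplex ℝ GS) :
    HasSum (fun t : ℕ => γ ^ t * expReward K p R μ t) (valueD γ K p R μ) := by
  simp only [valueD, expReward_eq_sum_stateDist]
  exact (hasSum_pow_mul_sum_stateDist hγ hγ1 hK hp hμ _).summable.hasSum

lemma valueD_eq_sum_occup (hγ : 0 ≤ γ) (hγ1 : γ < 1)
    (hK : ∀ s a, K s a ∈ stdSimplex ℝ GS) (hp : ∀ s, p s ∈ stdSimplex ℝ GA)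
    (hμ : μ ∈ stdSimplex ℝ GS) :
    valueD γ K p R μ = (1 - γ)⁻¹ * ∑ s, occup γ K p μ s * ∑ a, p s a * R s a := by
  simp only [valueD, expReward_eq_sum_stateDist]
  exact (hasSum_pow_mul_sum_stateDist hγ hγ1 hK hp hμ _).tsum_eq

lemma abs_valueD_le (hγ : 0 ≤ γ) (hγ1 : γ < 1)
    (hK : ∀ s a, K s a ∈ stdSimplex ℝ GS) (hp : ∀ s, p s ∈ stdSimplex ℝ GA)
    (hμ : μ ∈ stdSimplex ℝ GS) (hR : ∀ s a, |R s a| ≤ c) :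
    |valueD γ K p R μ| ≤ c / (1 - γ) := by
  have hγ' : 0 ≤ (1 - γ)⁻¹ := inv_nonneg.2 (sub_nonneg.2 hγ1.le)
  rw [valueD_eq_sum_occup hγ hγ1 hK hp hμ, abs_mul, abs_of_nonneg hγ', div_eq_inv_mul]
  exact mul_le_mul_of_nonneg_left (abs_sum_mul_le_of_mem_stdSimplex
    (occup_mem_stdSimplex hγ hγ1 hK hp hμ)
    fun s => abs_sum_mul_le_of_mem_stdSimplex (hp s) (hR s)) hγ'

lemma sum_stateDist_succ_mul (ρ : GS → ℝ) (t : ℕ) (X : GS → ℝ) :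
    ∑ s, stateDist K p ρ (t + 1) s * X s
      = ∑ s, stateDist K p ρ t s * ∑ a, p s a * ∑ s', K s a s' * X s' := by
  simp only [stateDist, mul_sum, sum_mul, mul_assoc]
  rw [sum_comm]
  exact sum_congr rfl fun s _ => sum_comm

-- The left-hand side is a telescoping sum along the trajectory.
lemma inv_mul_sum_occup_mul_sub (hγ : 0 ≤ γ) (hγ1 : γ < 1)
    (hK : ∀ s a, K s a ∈ stdSimplex ℝ GS) (hp : ∀ s, p s ∈ stdSimplex ℝ GA)
    (hμ : μ ∈ stdSimplex ℝ GS) (X : GS → ℝ) :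
    (1 - γ)⁻¹ * ∑ s, occup γ K p μ s * (X s - γ * ∑ a, p s a * ∑ s', K s a s' * X s')
      = ∑ s, μ s * X s := by
  have hsum := hasSum_pow_mul_sum_stateDist hγ hγ1 hK hp hμ
  have hnext := (hsum fun s => ∑ a, p s a * ∑ s', K s a s' * X s').mul_left γ
  simp only [← mul_assoc γ, ← pow_succ', ← sum_stateDist_succ_mul] at hnext
  have hshift := (hsum X).summable.tsum_eq_zero_add
  rw [(hsum X).tsum_eq, hnext.tsum_eq, pow_zero, one_mul, stateDist] at hshift
  simp only [mul_sub, sum_sub_distrib, mul_left_comm _ γ, ← mul_sum]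
  linarith

end Occupancy

section Bellman

variable {GS GA : Type*} [Fintype GS] [Fintype GA] {γ : ℝ} {K : GS → GA → GS → ℝ}
  {p : GS → GA → ℝ} {R : GS → GA → ℝ} {μ : GS → ℝ}

lemma stateDist_eq_sum_diracD (ρ : GS → ℝ) (t : ℕ) (s' : GS) :
    stateDist K p ρ t s' = ∑ s₀, ρ s₀ * stateDist K p (diracD s₀) t s' := by
  induction t generalizing s' with
  | zero => simp [stateDist, diracD]
  | succ t ih =>
    calc ∑ s, ∑ a, stateDist K p ρ t s * p s a * K s a s'
        = ∑ s, ∑ s₀, ∑ a, ρ s₀ * (stateDist K p (diracD s₀) t s * p s a * K s a s') := by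
          refine sum_congr rfl fun s _ => ?_
          simp only [ih s, sum_mul, mul_assoc]
          exact sum_comm
      _ = ∑ s₀, ρ s₀ * ∑ s, ∑ a, stateDist K p (diracD s₀) t s * p s a * K s a s' := by
          simp only [mul_sum]
          exact sum_comm

lemma stateDist_succ_eq (ρ : GS → ℝ) (t : ℕ) :
    stateDist K p ρ (t + 1) = stateDist K p (stateDist K p ρ 1) t := by
  induction t with
  | zero => rfl
  | succ t ih => funext s'; rw [stateDist, ih]; rfl

lemma expReward_eq_sum_diracD (ρ : GS → ℝ) (t : ℕ) :
    expReward K p R ρ t = ∑ s₀, ρ s₀ * expReward K p R (diracD s₀) t := by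
  simp only [expReward_eq_sum_stateDist, stateDist_eq_sum_diracD ρ, sum_mul, mul_sum, mul_assoc]
  exact (sum_congr rfl fun s _ => sum_comm).trans sum_comm

lemma valueD_eq_sum_valueV (hγ : 0 ≤ γ) (hγ1 : γ < 1)
    (hK : ∀ s a, K s a ∈ stdSimplex ℝ GS) (hp : ∀ s, p s ∈ stdSimplex ℝ GA) (ρ : GS → ℝ) :
    valueD γ K p R ρ = ∑ s, ρ s * valueV γ K p R s := by
  have hsum : HasSum (fun t : ℕ => ∑ s, ρ s * (γ ^ t * expReward K p R (diracD s) t))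
      (∑ s, ρ s * valueV γ K p R s) := hasSum_sum fun s _ =>
    (hasSum_pow_mul_expReward hγ hγ1 hK hp (diracD_mem_stdSimplex s)).mul_left (ρ s)
  simp only [mul_left_comm (ρ _), ← mul_sum, ← expReward_eq_sum_diracD] at hsum
  exact hsum.tsum_eq

lemma valueV_eq_sum_valueQ (hγ : 0 ≤ γ) (hγ1 : γ < 1)
    (hK : ∀ s a, K s a ∈ stdSimplex ℝ GS) (hp : ∀ s, p s ∈ stdSimplex ℝ GA) (s : GS) :
    valueV γ K p R s = ∑ a, p s a * valueQ γ K p R s a := by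
  have hshift : ∀ t, expReward K p R (diracD s) (t + 1)
      = expReward K p R (stateDist K p (diracD s) 1) t := fun t => by
    simp only [expReward, ← stateDist_succ_eq]
  have hnext := valueD_eq_sum_valueV (R := R) hγ hγ1 hK hp (stateDist K p (diracD s) 1)
  rw [sum_stateDist_succ_mul] at hnext
  calc valueV γ K p R s
      = expReward K p R (diracD s) 0 + γ * valueD γ K p R (stateDist K p (diracD s) 1) := by
        rw [valueV, valueD, (hasSum_pow_mul_expReward hγ hγ1 hK hp
          (diracD_mem_stdSimplex s)).summable.tsum_eq_zero_add]
        simp only [pow_zero, one_mul, pow_succ', mul_assoc, tsum_mul_left, hshift, valueD]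
    _ = ∑ a, p s a * R s a + γ * ∑ a, p s a * ∑ s', K s a s' * valueV γ K p R s' := by
        rw [hnext, expReward_eq_sum_stateDist]
        simp [stateDist, diracD]
    _ = ∑ a, p s a * valueQ γ K p R s a := by
        simp only [valueQ, mul_add, sum_add_distrib, mul_left_comm _ γ, ← mul_sum]

end Bellman

section PerformanceDifference

variable {GS GA : Type*} [Fintype GS] [Fintype GA] {γ : ℝ} {K : GS → GA → GS → ℝ}
  {p p' : GS → GA → ℝ} {R : GS → GA → ℝ} {μ : GS → ℝ} {c : ℝ}

lemma abs_valueQ_le (hγ : 0 ≤ γ) (hγ1 : γ < 1)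
    (hK : ∀ s a, K s a ∈ stdSimplex ℝ GS) (hp : ∀ s, p s ∈ stdSimplex ℝ GA)
    (hR : ∀ s a, |R s a| ≤ c) (s : GS) (a : GA) :
    |valueQ γ K p R s a| ≤ c / (1 - γ) := by
  have hnext : |∑ s', K s a s' * valueV γ K p R s'| ≤ c / (1 - γ) :=
    abs_sum_mul_le_of_mem_stdSimplex (hK s a)
      fun s' => abs_valueD_le hγ hγ1 hK hp (diracD_mem_stdSimplex s') hR
  calc |valueQ γ K p R s a|
      ≤ |R s a| + γ * |∑ s', K s a s' * valueV γ K p R s'| :=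
        (abs_add_le _ _).trans_eq (by rw [abs_mul, abs_of_nonneg hγ])
    _ ≤ c + γ * (c / (1 - γ)) := by gcongr; exact hR s a
    _ = c / (1 - γ) := by field_simp [(sub_pos.2 hγ1).ne']; ring

/-- The reward `∑ a, q(s, a) Q^p(s, a)` earned by perturbing the policy `p` by `q`, so that the
performance difference lemma states that `V^{p + q} - V^p` is the value of `p + q` for this reward.
It does not depend on the action. -/
noncomputable def policyGain (γ : ℝ) (K : GS → GA → GS → ℝ) (p : GS → GA → ℝ)
    (R q : GS → GA → ℝ) : GS → GA → ℝ :=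
  fun s _ => ∑ a, q s a * valueQ γ K p R s a

lemma abs_policyGain_le {q : GS → GA → ℝ} {δ : ℝ} (hγ : 0 ≤ γ) (hγ1 : γ < 1)
    (hK : ∀ s a, K s a ∈ stdSimplex ℝ GS) (hp : ∀ s, p s ∈ stdSimplex ℝ GA)
    (hR : ∀ s a, |R s a| ≤ c) (hq : ∀ s, ∑ a, |q s a| ≤ δ) (s : GS) (a : GA) :
    |policyGain γ K p R q s a| ≤ δ * (c / (1 - γ)) :=
  abs_sum_mul_le ((abs_nonneg _).trans (abs_valueQ_le hγ hγ1 hK hp hR s a)) (hq s)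
    (abs_valueQ_le hγ hγ1 hK hp hR s)

lemma valueD_policyGain (hγ : 0 ≤ γ) (hγ1 : γ < 1)
    (hK : ∀ s a, K s a ∈ stdSimplex ℝ GS) (hp' : ∀ s, p' s ∈ stdSimplex ℝ GA)
    (hμ : μ ∈ stdSimplex ℝ GS) (q : GS → GA → ℝ) :
    valueD γ K p' (policyGain γ K p R q) μ
      = (1 - γ)⁻¹ * ∑ s, occup γ K p' μ s * ∑ a, q s a * valueQ γ K p R s a := by
  simp only [valueD_eq_sum_occup hγ hγ1 hK hp' hμ, policyGain, ← sum_mul, (hp' _).2, one_mul]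

lemma valueD_sub_valueD (hγ : 0 ≤ γ) (hγ1 : γ < 1)
    (hK : ∀ s a, K s a ∈ stdSimplex ℝ GS) (hp : ∀ s, p s ∈ stdSimplex ℝ GA)
    (hp' : ∀ s, p' s ∈ stdSimplex ℝ GA) (hμ : μ ∈ stdSimplex ℝ GS) :
    valueD γ K p' R μ - valueD γ K p R μ
      = valueD γ K p' (policyGain γ K p R (p' - p)) μ := by
  rw [valueD_policyGain hγ hγ1 hK hp' hμ, valueD_eq_sum_occup hγ hγ1 hK hp' hμ,
    valueD_eq_sum_valueV hγ hγ1 hK hp μ, ← inv_mul_sum_occup_mul_sub hγ hγ1 hK hp' hμ, ← mul_sub,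
    ← sum_sub_distrib]
  congr 1
  refine sum_congr rfl fun s _ => ?_
  simp only [Pi.sub_apply, sub_mul, sum_sub_distrib, ← valueV_eq_sum_valueQ hγ hγ1 hK hp]
  simp only [valueQ, mul_add, sum_add_distrib, mul_left_comm _ γ, ← mul_sum]
  ring

/-- The directional derivative of the value at the policy `p`, in the form given by the policy
gradient theorem. -/
noncomputable def valueGradient (γ : ℝ) (K : GS → GA → GS → ℝ) (p : GS → GA → ℝ)
    (R : GS → GA → ℝ) (μ : GS → ℝ) : (GS → GA → ℝ) →ₗ[ℝ] ℝ where
  toFun q := (1 - γ)⁻¹ * ∑ s, occup γ K p μ s * ∑ a, q s a * valueQ γ K p R s a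
  map_add' q q' := by
    simp only [Pi.add_apply, add_mul, mul_add, sum_add_distrib]
  map_smul' c q := by
    simp only [Pi.smul_apply, smul_eq_mul, mul_assoc, mul_left_comm _ c, ← mul_sum,
      RingHom.id_apply]

lemma valueD_policyGain_self (hγ : 0 ≤ γ) (hγ1 : γ < 1)
    (hK : ∀ s a, K s a ∈ stdSimplex ℝ GS) (hp : ∀ s, p s ∈ stdSimplex ℝ GA)
    (hμ : μ ∈ stdSimplex ℝ GS) (q : GS → GA → ℝ) :
    valueD γ K p (policyGain γ K p R q) μ = valueGradient γ K p R μ q :=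
  valueD_policyGain hγ hγ1 hK hp hμ q

lemma abs_valueGradient_le {q : GS → GA → ℝ} {ε : ℝ} (hγ : 0 ≤ γ) (hγ1 : γ < 1)
    (hK : ∀ s a, K s a ∈ stdSimplex ℝ GS) (hp : ∀ s, p s ∈ stdSimplex ℝ GA)
    (hμ : μ ∈ stdSimplex ℝ GS) (hR : ∀ s a, |R s a| ≤ c) (hq : ∀ s, ∑ a, |q s a| ≤ ε) :
    |valueGradient γ K p R μ q| ≤ ε * (c / (1 - γ)) / (1 - γ) := by
  rw [← valueD_policyGain_self hγ hγ1 hK hp hμ]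
  exact abs_valueD_le hγ hγ1 hK hp hμ (abs_policyGain_le hγ hγ1 hK hp hR hq)

lemma abs_valueD_sub_sub_valueGradient_le {q : GS → GA → ℝ} {δ ε : ℝ}
    (hγ : 0 ≤ γ) (hγ1 : γ < 1)
    (hK : ∀ s a, K s a ∈ stdSimplex ℝ GS) (hp : ∀ s, p s ∈ stdSimplex ℝ GA)
    (hp' : ∀ s, p' s ∈ stdSimplex ℝ GA) (hμ : μ ∈ stdSimplex ℝ GS) (hR : ∀ s a, |R s a| ≤ c)
    (hδ : ∀ s, ∑ a, |(p' - p) s a| ≤ δ) (hε : ∀ s, ∑ a, |(p' - p - q) s a| ≤ ε) :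
    |valueD γ K p' R μ - valueD γ K p R μ - valueGradient γ K p R μ q|
      ≤ δ * (δ * (c / (1 - γ)) / (1 - γ)) / (1 - γ) + ε * (c / (1 - γ)) / (1 - γ) := by
  set g := policyGain γ K p R (p' - p)
  have hsplit : valueD γ K p' R μ - valueD γ K p R μ - valueGradient γ K p R μ q
      = valueD γ K p' (policyGain γ K p g (p' - p)) μ
        + valueGradient γ K p R μ (p' - p - q) := by
    rw [← valueD_sub_valueD hγ hγ1 hK hp hp' hμ, valueD_policyGain_self hγ hγ1 hK hp hμ,
      ← valueD_sub_valueD hγ hγ1 hK hp hp' hμ, map_sub _ (p' - p) q]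
    ring
  rw [hsplit]
  refine (abs_add_le _ _).trans (add_le_add ?_ (abs_valueGradient_le hγ hγ1 hK hp hμ hR hε))
  exact abs_valueD_le hγ hγ1 hK hp' hμ (abs_policyGain_le hγ hγ1 hK hp
    (abs_policyGain_le hγ hγ1 hK hp hR hδ) hδ)

end PerformanceDifference

section QuadraticRemainder

variable {N : ℕ} {S A : Fin N → Type*} [∀ n, Fintype (S n)] [∀ n, Fintype (A n)]

lemma sqNorm_nonneg (v : ∀ n, S n → A n → ℝ) : 0 ≤ sqNorm v :=
  sum_nonneg fun _ _ => sum_nonneg fun _ _ => sum_nonneg fun _ _ => sq_nonneg _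

lemma eucNorm_sq (v : ∀ n, S n → A n → ℝ) : eucNorm v ^ 2 = sqNorm v :=
  Real.sq_sqrt (sqNorm_nonneg v)

lemma sqNorm_sub_comm (v w : ∀ n, S n → A n → ℝ) : sqNorm (v - w) = sqNorm (w - v) := by
  simp only [sqNorm, Pi.sub_apply, sub_sq_comm]

lemma sqNorm_le_norm_sq (v : ∀ n, S n → A n → ℝ) :
    sqNorm v ≤ (∑ n, (Fintype.card (S n) * Fintype.card (A n) : ℝ)) * ‖v‖ ^ 2 := by
  have hcoord : ∀ n s a, v n s a ^ 2 ≤ ‖v‖ ^ 2 := fun n s a => sq_le_sq.2 <| by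
    rw [abs_norm]
    exact (norm_le_pi_norm (v n s) a).trans
      ((norm_le_pi_norm (v n) s).trans (norm_le_pi_norm v n))
  calc sqNorm v ≤ ∑ n, ∑ _s : S n, ∑ _a : A n, ‖v‖ ^ 2 :=
        sum_le_sum fun n _ => sum_le_sum fun s _ => sum_le_sum fun a _ => hcoord n s a
    _ = _ := by simp [sum_mul, mul_assoc]

/-- `f` differs from its affine approximation at `θ` with linear part `f'` by at most
`C ‖θ' - θ‖₂²` at every `θ'`. -/
def HasQuadraticRemainder (f : (∀ n, S n → A n → ℝ) → ℝ)
    (f' : (∀ n, S n → A n → ℝ) →ₗ[ℝ] ℝ) (C : ℝ) (θ : ∀ n, S n → A n → ℝ) : Prop :=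
  ∀ θ', |f θ' - f θ - f' (θ' - θ)| ≤ C * sqNorm (θ' - θ)

namespace HasQuadraticRemainder

variable {f g : (∀ n, S n → A n → ℝ) → ℝ} {f' g' : (∀ n, S n → A n → ℝ) →ₗ[ℝ] ℝ} {C D : ℝ}
  {θ : ∀ n, S n → A n → ℝ}

lemma add (hf : HasQuadraticRemainder f f' C θ) (hg : HasQuadraticRemainder g g' D θ) :
    HasQuadraticRemainder (fun θ => f θ + g θ) (f' + g') (C + D) θ := fun θ' =>
  calc _ = |(f θ' - f θ - f' (θ' - θ)) + (g θ' - g θ - g' (θ' - θ))| := by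
        rw [LinearMap.add_apply]; ring_nf
    _ ≤ C * sqNorm (θ' - θ) + D * sqNorm (θ' - θ) :=
        (abs_add_le _ _).trans (add_le_add (hf θ') (hg θ'))
    _ = _ := (add_mul _ _ _).symm

lemma const_mul {b : ℝ} (hb : 0 ≤ b) (hf : HasQuadraticRemainder f f' C θ) :
    HasQuadraticRemainder (fun θ => b * f θ) (b • f') (b * C) θ := fun θ' => by
  rw [LinearMap.smul_apply, smul_eq_mul, ← mul_sub, ← mul_sub, abs_mul, abs_of_nonneg hb,
    mul_assoc]
  exact mul_le_mul_of_nonneg_left (hf θ') hb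

lemma sum {ι : Type*} {s : Finset ι} {f : ι → (∀ n, S n → A n → ℝ) → ℝ}
    {f' : ι → (∀ n, S n → A n → ℝ) →ₗ[ℝ] ℝ} {C : ι → ℝ}
    (hf : ∀ i ∈ s, HasQuadraticRemainder (f i) (f' i) (C i) θ) :
    HasQuadraticRemainder (fun θ => ∑ i ∈ s, f i θ) (∑ i ∈ s, f' i) (∑ i ∈ s, C i) θ :=
  fun θ' => by
    rw [LinearMap.sum_apply, ← sum_sub_distrib, ← sum_sub_distrib, sum_mul]
    exact (abs_sum_le_sum_abs _ _).trans (sum_le_sum fun i hi => hf i hi θ')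

lemma hasFDerivAt (hf : HasQuadraticRemainder f f' C θ) :
    HasFDerivAt f f'.toContinuousLinearMap θ := by
  have hbig : (fun θ' => f θ' - f θ - f' (θ' - θ)) =O[nhds θ] fun θ' => ‖θ' - θ‖ ^ 2 := by
    refine .of_bound (|C| * ∑ n, (Fintype.card (S n) * Fintype.card (A n) : ℝ)) (.of_forall ?_)
    intro θ'
    calc ‖f θ' - f θ - f' (θ' - θ)‖ ≤ |C| * sqNorm (θ' - θ) :=
          (hf θ').trans (mul_le_mul_of_nonneg_right (le_abs_self C) (sqNorm_nonneg _))
      _ ≤ _ := by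
          rw [mul_assoc, norm_pow, norm_norm]
          exact mul_le_mul_of_nonneg_left (sqNorm_le_norm_sq _) (abs_nonneg C)
  exact .of_isLittleO (hbig.trans_isLittleO (Asymptotics.isLittleO_pow_sub_sub θ one_lt_two))

lemma abs_sub_sub_fderiv_le (hf : HasQuadraticRemainder f f' C θ) (θ' : ∀ n, S n → A n → ℝ) :
    |f θ - f θ' - fderiv ℝ f θ (θ - θ')| ≤ C * eucNorm (θ - θ') ^ 2 := by
  have hneg : f θ - f θ' - f' (θ - θ') = -(f θ' - f θ - f' (θ' - θ)) := by
    rw [← neg_sub θ' θ, map_neg]; ring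
  rw [hf.hasFDerivAt.fderiv, eucNorm_sq, sqNorm_sub_comm, LinearMap.coe_toContinuousLinearMap',
    hneg, abs_neg]
  exact hf θ'

end HasQuadraticRemainder

end QuadraticRemainder

section ProductSystem

variable {N : ℕ} {S A : Fin N → Type*}

/-- The logits of the product policy on the joint state-action space: the product of the agents'
softmax policies is the softmax policy of these logits. -/
def jointLogit : (∀ n, S n → A n → ℝ) →ₗ[ℝ] ((∀ n, S n) → (∀ n, A n) → ℝ) where
  toFun θ s a := ∑ n, θ n (s n) (a n)
  map_add' θ θ' := by funext s a; exact sum_add_distrib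
  map_smul' c θ := by funext s a; exact (mul_sum _ _ _).symm

lemma gPolicy_eq_softmaxPol [∀ n, Fintype (A n)] (θ : ∀ n, S n → A n → ℝ) :
    gPolicy θ = softmaxPol (jointLogit θ) := by
  funext s a
  simp only [gPolicy, softmaxPol, jointLogit, LinearMap.coe_mk, AddHom.coe_mk, prod_div_distrib,
    Real.exp_sum, prod_univ_sum, Fintype.piFinset_univ]

lemma jointLogit_sq_le [∀ n, Fintype (S n)] [∀ n, Fintype (A n)] (v : ∀ n, S n → A n → ℝ)
    (s : ∀ n, S n) (a : ∀ n, A n) : jointLogit v s a ^ 2 ≤ N * sqNorm v :=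
  calc (∑ n, v n (s n) (a n)) ^ 2 ≤ N * ∑ n, v n (s n) (a n) ^ 2 := by
        simpa using sq_sum_le_card_mul_sum_sq (s := univ) (f := fun n => v n (s n) (a n))
    _ ≤ N * sqNorm v := by
        refine mul_le_mul_of_nonneg_left (sum_le_sum fun n _ => ?_) N.cast_nonneg
        exact (single_le_sum (fun a _ => sq_nonneg (v n (s n) a)) (mem_univ (a n))).trans
          (single_le_sum (f := fun s => ∑ a, v n s a ^ 2)
            (fun s _ => sum_nonneg fun a _ => sq_nonneg _) (mem_univ (s n)))

lemma gKernel_mem_stdSimplex [∀ n, Fintype (S n)] {P : ∀ n, S n → A n → S n → ℝ}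
    (hP : ∀ n s a, P n s a ∈ stdSimplex ℝ (S n)) (s : ∀ n, S n) (a : ∀ n, A n) :
    gKernel P s a ∈ stdSimplex ℝ (∀ n, S n) := by
  refine ⟨fun s' => prod_nonneg fun n _ => (hP n _ _).1 _, ?_⟩
  simp only [gKernel, ← Fintype.piFinset_univ, ← prod_univ_sum, (hP _ _ _).2, prod_const_one]

end ProductSystem

section RegularizedObjective

variable {N : ℕ} {S A : Fin N → Type*} [∀ n, Fintype (S n)] [∀ n, Fintype (A n)]

/-- The entropy-regularized objective of `N` agents with independent softmax policies, for an
arbitrary transition kernel `K` and reward `R` on the joint state-action space. -/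
noncomputable def regularizedObjective (γ : ℝ) (K : (∀ n, S n) → (∀ n, A n) → (∀ n, S n) → ℝ)
    (R : (∀ n, S n) → (∀ n, A n) → ℝ) (μ : (∀ n, S n) → ℝ) (lam : ℝ)
    (θ : ∀ n, S n → A n → ℝ) : ℝ :=
  valueD γ K (gPolicy θ) R μ +
    ∑ n, (lam / ((Fintype.card (S n) : ℝ) * (Fintype.card (A n) : ℝ))) *
      ∑ sn, ∑ an, Real.log (softmaxPol (θ n) sn an)

variable [∀ n, Nonempty (A n)]

lemma hasQuadraticRemainder_valueD {γ c : ℝ} {K : (∀ n, S n) → (∀ n, A n) → (∀ n, S n) → ℝ}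
    {R : (∀ n, S n) → (∀ n, A n) → ℝ} {μ : (∀ n, S n) → ℝ} (hγ : 0 ≤ γ) (hγ1 : γ < 1)
    (hK : ∀ s a, K s a ∈ stdSimplex ℝ (∀ n, S n)) (hμ : μ ∈ stdSimplex ℝ (∀ n, S n))
    (hR : ∀ s a, |R s a| ≤ c) (θ : ∀ n, S n → A n → ℝ) :
    HasQuadraticRemainder (fun θ => valueD γ K (gPolicy θ) R μ)
      (valueGradient γ K (gPolicy θ) R μ ∘ₗ softmaxDeriv (jointLogit θ) ∘ₗ jointLogit)
      ((2 - γ) * N * c / (1 - γ) ^ 3) θ := fun θ' => by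
  obtain ⟨v, rfl⟩ : ∃ v, θ' = θ + v := ⟨θ' - θ, (add_sub_cancel θ θ').symm⟩
  set C : ℝ := N * sqNorm v
  have hC : 0 ≤ C := mul_nonneg N.cast_nonneg (sqNorm_nonneg v)
  have hv := fun s => jointLogit_sq_le v s
  have hbound := abs_valueD_sub_sub_valueGradient_le hγ hγ1 hK
    (fun s => softmaxPol_mem_stdSimplex (jointLogit θ) s)
    (fun s => softmaxPol_mem_stdSimplex (jointLogit θ + jointLogit v) s) hμ hR
    (fun s => sum_abs_softmaxPol_sub_le (hv s))
    (fun s => sum_abs_softmaxPol_sub_sub_softmaxDeriv_le (hv s))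
  have hconst : √C * (√C * (c / (1 - γ)) / (1 - γ)) / (1 - γ) + C * (c / (1 - γ)) / (1 - γ)
      = (2 - γ) * N * c / (1 - γ) ^ 3 * sqNorm v := by
    have hne := (sub_pos.2 hγ1).ne'
    calc _ = (√C * √C + C * (1 - γ)) * (c / (1 - γ) ^ 3) := by field_simp
      _ = _ := by rw [Real.mul_self_sqrt hC]; ring
  simpa only [add_sub_cancel_left, gPolicy_eq_softmaxPol, map_add, LinearMap.comp_apply]
    using hbound.trans_eq hconst

lemma hasQuadraticRemainder_sum_log_softmaxPol (θ : ∀ n, S n → A n → ℝ) (n : Fin N) :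
    HasQuadraticRemainder (fun θ => ∑ s, ∑ a, Real.log (softmaxPol (θ n) s a))
      (∑ s, ∑ a, LinearMap.proj a ∘ₗ LinearMap.proj s ∘ₗ logSoftmaxDeriv (θ n) ∘ₗ
        LinearMap.proj n) (Fintype.card (A n) / 2) θ := fun θ' => by
  obtain ⟨v, rfl⟩ : ∃ v, θ' = θ + v := ⟨θ' - θ, (add_sub_cancel θ θ').symm⟩
  simp only [add_sub_cancel_left, LinearMap.sum_apply, LinearMap.comp_apply, LinearMap.proj_apply,
    ← sum_sub_distrib, Pi.add_apply]
  calc |∑ s, ∑ a, (Real.log (softmaxPol (θ n + v n) s a) - Real.log (softmaxPol (θ n) s a)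
          - logSoftmaxDeriv (θ n) (v n) s a)|
      ≤ ∑ s, ∑ _a : A n, (∑ b, v n s b ^ 2) / 2 :=
        (abs_sum_le_sum_abs _ _).trans <| sum_le_sum fun s _ =>
          (abs_sum_le_sum_abs _ _).trans <| sum_le_sum fun a _ =>
            abs_log_softmaxPol_sub_sub_le a fun b =>
              single_le_sum (fun b _ => sq_nonneg (v n s b)) (mem_univ b)
    _ = Fintype.card (A n) / 2 * ∑ s, ∑ a, v n s a ^ 2 := by
        simp only [sum_const, card_univ, nsmul_eq_mul, mul_sum]
        exact sum_congr rfl fun s _ => by rw [← mul_sum]; ring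
    _ ≤ Fintype.card (A n) / 2 * sqNorm v := by
        gcongr
        exact single_le_sum (f := fun n => ∑ s, ∑ a, v n s a ^ 2)
          (fun n _ => sum_nonneg fun s _ => sum_nonneg fun a _ => sq_nonneg _) (mem_univ n)

theorem regularized_objective_smoothness_general {γ c lam : ℝ}
    {K : (∀ n, S n) → (∀ n, A n) → (∀ n, S n) → ℝ} {R : (∀ n, S n) → (∀ n, A n) → ℝ}
    {μ : (∀ n, S n) → ℝ} (hγ : 0 ≤ γ) (hγ1 : γ < 1)
    (hK : ∀ s a, K s a ∈ stdSimplex ℝ (∀ n, S n)) (hμ : μ ∈ stdSimplex ℝ (∀ n, S n))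
    (hR : ∀ s a, |R s a| ≤ c) (hlam : 0 ≤ lam) (θ θ' : ∀ n, S n → A n → ℝ) :
    DifferentiableAt ℝ (regularizedObjective γ K R μ lam) θ ∧
    |regularizedObjective γ K R μ lam θ - regularizedObjective γ K R μ lam θ'
        - fderiv ℝ (regularizedObjective γ K R μ lam) θ (θ - θ')|
      ≤ ((2 - γ) * N * c / (1 - γ) ^ 3 + ∑ n, lam / (2 * Fintype.card (S n)))
          * eucNorm (θ - θ') ^ 2 := by
  have hweight : ∀ n, lam / (Fintype.card (S n) * Fintype.card (A n)) * (Fintype.card (A n) / 2)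
      = lam / (2 * Fintype.card (S n)) := fun n => by field_simp
  have hrem := (hasQuadraticRemainder_valueD hγ hγ1 hK hμ hR θ).add <| .sum fun n (_ : n ∈ univ) =>
    (hasQuadraticRemainder_sum_log_softmaxPol θ n).const_mul
      (b := lam / (Fintype.card (S n) * Fintype.card (A n))) (by positivity)
  simp only [hweight] at hrem
  exact ⟨hrem.hasFDerivAt.differentiableAt, hrem.abs_sub_sub_fderiv_le θ'⟩

end RegularizedObjective

/-- Smoothness of the entropy-regularized objective
`L_λ(θ) = V^{π_θ}(μ) + Σ_n (λ/(|S_n||A_n|)) Σ_{s_n,a_n} log π_{θ_n}(a_n|s_n)`: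
for all `θ, θ'`,
`|L_λ(θ) − L_λ(θ') − ⟨∇L_λ(θ), θ−θ'⟩| ≤ (24N²/(1−γ)³ + Σ_n λ/|S_n|)‖θ−θ'‖₂²`. -/
theorem regularized_objective_smoothness
    {N : ℕ} (hN : 1 ≤ N)
    {S A : Fin N → Type*}
    [∀ n, Fintype (S n)] [∀ n, Nonempty (S n)]
    [∀ n, Fintype (A n)] [∀ n, Nonempty (A n)]
    (Nbr : Fin N → Finset (Fin N)) (hNbr : ∀ n, n ∈ Nbr n)
    (r : Fin N → (∀ k, S k) → (∀ k, A k) → ℝ)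
    (hr0 : ∀ n s a, 0 ≤ r n s a) (hr1 : ∀ n s a, r n s a ≤ 1)
    (hrloc : ∀ n (s s' : ∀ k, S k) (a a' : ∀ k, A k),
      (∀ k ∈ Nbr n, s k = s' k) → (∀ k ∈ Nbr n, a k = a' k) → r n s a = r n s' a')
    (P : ∀ n, S n → A n → S n → ℝ)
    (hP0 : ∀ n sn an s'n, 0 ≤ P n sn an s'n)
    (hP1 : ∀ n sn an, ∑ s'n, P n sn an s'n = 1)
    (γ : ℝ) (hγ0 : 0 < γ) (hγ1 : γ < 1)
    (Rg : (∀ k, S k) → (∀ k, A k) → ℝ)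
    (hRg : Rg = fun s a => (N : ℝ)⁻¹ * ∑ m, r m s a)
    (μ : (∀ k, S k) → ℝ) (hμ0 : ∀ s, 0 ≤ μ s) (hμ1 : ∑ s, μ s = 1)
    (lam : ℝ) (hlam : 0 < lam)
    (Lobj : (∀ n, S n → A n → ℝ) → ℝ)
    (hLobj : Lobj = fun θ => valueD γ (gKernel P) (gPolicy θ) Rg μ +
      ∑ n, (lam / ((Fintype.card (S n) : ℝ) * (Fintype.card (A n) : ℝ))) *
        ∑ sn, ∑ an, Real.log (softmaxPol (θ n) sn an))
    (θ θ' : ∀ n, S n → A n → ℝ) :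
    DifferentiableAt ℝ Lobj θ ∧
    |Lobj θ - Lobj θ' - fderiv ℝ Lobj θ (θ - θ')|
      ≤ (24 * (N : ℝ) ^ 2 / (1 - γ) ^ 3 + ∑ n, lam / (Fintype.card (S n) : ℝ)) *
          (eucNorm (θ - θ')) ^ 2 := by
  subst hRg hLobj
  have hR : ∀ s a, |(N : ℝ)⁻¹ * ∑ m, r m s a| ≤ 1 := fun s a => by
    simpa only [card_fin] using abs_average_le_one (s := univ) (x := fun m => r m s a)
      fun m _ => (abs_of_nonneg (hr0 m s a)).trans_le (hr1 m s a)
  obtain ⟨hdiff, hbound⟩ := regularized_objective_smoothness_general hγ0.le hγ1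
    (gKernel_mem_stdSimplex fun n s a => ⟨hP0 n s a, hP1 n s a⟩) ⟨hμ0, hμ1⟩ hR hlam.le θ θ'
  have hvalue : (2 - γ) * N * 1 ≤ 24 * (N : ℝ) ^ 2 := by
    have hN1 : (1 : ℝ) ≤ N := by exact_mod_cast hN
    nlinarith
  exact ⟨hdiff, hbound.trans <| by
    gcongr
    exact le_mul_of_one_le_left (Nat.cast_nonneg _) one_le_two⟩
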